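/- Let k, ℓ, t, q be positive integers with k ≥ 4. There exist a constant C = C(k,ℓ,t,q) and an integer n₀ = n₀(k,ℓ) such that for every integer n ≥ n₀: every family F ⊆ binom([n],k) with |F| ≥ t·C(n,k−1) + C·n^{k−2+2/(k−1)} contains a copy of the k-uniform linear path P^{(k)}_ℓ or a copy of the k-blowup [K_{t+1,q}]^{(k)} of the complete bipartite graph K_{t+1,q}. -/

import Mathlib

open Finset

/-- The family `F` of k-sets contains a k-uniform linear path of length ℓ:
distinct members `P 0, …, P (ℓ-1)` with consecutive members meeting in exactly one
vertex and non-consecutive members disjoint. -/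
def ContainsLinearPath (k ℓ : ℕ) {n : ℕ} (F : Finset (Finset (Fin n))) : Prop :=
  ∃ P : Fin ℓ → Finset (Fin n), Function.Injective P ∧
    (∀ i, P i ∈ F) ∧ (∀ i, (P i).card = k) ∧
    (∀ i j : Fin ℓ, (i : ℕ) + 1 = (j : ℕ) → (P i ∩ P j).card = 1) ∧
    (∀ i j : Fin ℓ, (i : ℕ) + 1 < (j : ℕ) → P i ∩ P j = ∅)

/-- The family `F` of k-sets contains a copy of the k-blowup `H^{(k)}` of the graph `H`. -/
def ContainsBlowup (k : ℕ) {α : Type*} (H : SimpleGraph α) {n : ℕ}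
    (F : Finset (Finset (Fin n))) : Prop :=
  ∃ φ : α → Fin n, Function.Injective φ ∧
    ∃ E : Sym2 α → Finset (Fin n),
      (∀ e ∈ H.edgeSet, E e ∈ F ∧ (E e).card = k ∧ ∀ a : α, (a ∈ e ↔ φ a ∈ E e)) ∧
      (∀ e ∈ H.edgeSet, ∀ e' ∈ H.edgeSet, e ≠ e' →
        ∀ v, v ∈ E e → v ∈ E e' → ∃ a : α, a ∈ e ∧ a ∈ e' ∧ v = φ a)

/-!
A set `A` is an `s`-kernel of `F` if, whatever `s` vertices are to be avoided, some member of `F`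
extends `A` without meeting them outside `A`. The pairs that are kernels form the kernel graph. When
`s` is large, a copy of a graph `H` in the kernel graph can be expanded greedily, edge by edge, to a
copy of the blowup of `H` in `F`. So it suffices to bound `|F|` when the kernel graph contains
neither a path of length `ℓ` nor `K_{t+1,q}`; it then has `O(n)` edges.

By the delta-system method, a positive proportion of any subfamily of `F` is homogeneous: its
members are rainbow for a colouring of the vertices with `k` colours, and the colour sets whose
parts are kernels form an intersection-closed family. Either some `k - 2` colours always determine
the member, so that there are at most `n^{k-2}` members, or (as `k ≥ 4`) every member has a centre,
a vertex joined in the kernel graph to all its other vertices, or the kernel graph contains long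
paths. Hence all but `O(n^{k-2})` members of `F` have a centre.

Finally let `L` be the set of vertices of degree at least `n^{(k-2)/(k-1)}` in the kernel graph, so
that `|L| = O(n^{1/(k-1)})`. Members centred outside `L`, members meeting `L` twice, and members
whose vertices outside `L` all have more than `t` neighbours in `L` number
`O(n^{k-2+2/(k-1)})`. Any other member is a `(k-1)`-set together with one of at most `t` vertices.
-/

open SimpleGraph (pathGraph)

section Kernel

variable {V : Type*} [DecidableEq V] {s k : ℕ} {F : Finset (Finset V)}

/-- `A` is an `s`-kernel of `F` if, whichever `s` vertices are forbidden, some member of `F`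
extends `A` without using a forbidden vertex outside `A`. It plays the role of the centre of a
sunflower with more than `s` petals. -/
def IsKernel (s : ℕ) (F : Finset (Finset V)) (A : Finset V) : Prop :=
  ∀ U : Finset V, #U ≤ s → ∃ E ∈ F, A ⊆ E ∧ E ∩ U ⊆ A

lemma IsKernel.mono {F' : Finset (Finset V)} {A : Finset V} (h : IsKernel s F A) (hF : F ⊆ F') :
    IsKernel s F' A := fun U hU ↦
  let ⟨E, hE, hAE⟩ := h U hU
  ⟨E, hF hE, hAE⟩

/-- The graph of the two-element `s`-kernels of `F`. -/
def kernelGraph (s : ℕ) (F : Finset (Finset V)) : SimpleGraph V where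
  Adj u v := u ≠ v ∧ IsKernel s F {u, v}
  symm := ⟨fun u v h ↦ ⟨h.1.symm, pair_comm u v ▸ h.2⟩⟩
  loopless := ⟨fun _ h ↦ h.1 rfl⟩

lemma kernelGraph_mono {F' : Finset (Finset V)} (hF : F ⊆ F') :
    kernelGraph s F ≤ kernelGraph s F' := fun _ _ h ↦ ⟨h.1, h.2.mono hF⟩

/-- Kernels inside `W` extend greedily: each new member avoids `W` and all earlier ones. -/
theorem exists_extension_of_forall_isKernel {ι : Type*} (hF : ∀ E ∈ F, #E = k)
    (A : ι → Finset V) (W : Finset V) (T : Finset ι) (hker : ∀ i ∈ T, IsKernel s F (A i))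
    (hAW : ∀ i ∈ T, A i ⊆ W) (hs : #W + k * #T ≤ s) :
    ∃ E : ι → Finset V, (∀ i ∈ T, E i ∈ F ∧ A i ⊆ E i ∧ E i ∩ W ⊆ A i) ∧
      (T : Set ι).Pairwise fun i j ↦ E i ∩ E j ⊆ A i ∩ A j := by
  classical
  induction T using Finset.induction_on with
  | empty => exact ⟨fun _ ↦ ∅, by simp, by simp⟩
  | insert i₀ T hi₀ ih =>
    rw [card_insert_of_notMem hi₀] at hs
    obtain ⟨E, hE, hpair⟩ := ih (fun i hi ↦ hker i (mem_insert_of_mem hi))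
      (fun i hi ↦ hAW i (mem_insert_of_mem hi)) (by linarith)
    have hcard : #(W ∪ T.biUnion E) ≤ s := calc
      _ ≤ #W + #(T.biUnion E) := card_union_le _ _
      _ ≤ #W + #T * k := by
        gcongr
        exact card_biUnion_le_card_mul _ _ _ fun i hi ↦ (hF _ (hE i hi).1).le
      _ ≤ s := by linarith
    obtain ⟨E₀, hE₀, hA₀, havoid⟩ := hker i₀ (mem_insert_self _ _) _ hcard
    have hE₀E : ∀ j ∈ T, E₀ ∩ E j ⊆ A i₀ ∩ A j := by
      intro j hj v hv
      have ⟨hv₀, hvj⟩ := mem_inter.1 hv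
      have hvA : v ∈ A i₀ :=
        havoid (mem_inter.2 ⟨hv₀, mem_union_right _ (mem_biUnion.2 ⟨j, hj, hvj⟩)⟩)
      exact mem_inter.2
        ⟨hvA, (hE j hj).2.2 (mem_inter.2 ⟨hvj, hAW i₀ (mem_insert_self _ _) hvA⟩)⟩
    have hupdate : ∀ j ∈ T, Function.update E i₀ E₀ j = E j := fun j hj ↦
      Function.update_of_ne (ne_of_mem_of_not_mem hj hi₀) _ _
    refine ⟨Function.update E i₀ E₀, forall_mem_insert _ _ _ |>.2 ⟨?_, fun j hj ↦ ?_⟩, ?_⟩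
    · rw [Function.update_self]
      exact ⟨hE₀, hA₀, (inter_subset_inter_left subset_union_left).trans havoid⟩
    · rw [hupdate j hj]
      exact hE j hj
    · rw [coe_insert, Set.pairwise_insert_of_notMem (mod_cast hi₀)]
      refine ⟨fun i hi j hj hij ↦ ?_, fun j hj ↦ ?_⟩
      · simpa only [hupdate i hi, hupdate j hj] using hpair hi hj hij
      · rw [Function.update_self, hupdate j hj, inter_comm (E j), inter_comm (A j)]
        exact ⟨hE₀E j hj, hE₀E j hj⟩

end Kernel

section Blowup

variable {n k s : ℕ} {F : Finset (Finset (Fin n))}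

theorem containsBlowup_of_isContained_kernelGraph {α : Type*} [Fintype α] {H : SimpleGraph α}
    [Fintype H.edgeSet] (hF : ∀ E ∈ F, #E = k) (hH : H.IsContained (kernelGraph s F))
    (hs : Fintype.card α + k * #H.edgeFinset ≤ s) : ContainsBlowup k H F := by
  obtain ⟨φ⟩ := hH
  have hmem (e : Sym2 α) (v : Fin n) : v ∈ (e.map φ).toFinset ↔ ∃ a ∈ e, φ a = v := by
    rw [Sym2.mem_toFinset, Sym2.mem_map]
  obtain ⟨E, hE, hpair⟩ := exists_extension_of_forall_isKernel hF
    (fun e : Sym2 α ↦ (e.map φ).toFinset) (univ.image φ) H.edgeFinset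
    (fun e he ↦ by
      induction e with | _ x y =>
      simpa [Sym2.toFinset_mk_eq] using (φ.toHom.map_adj (by simpa using he)).2)
    (fun e _ v hv ↦ by obtain ⟨a, -, rfl⟩ := (hmem e v).1 hv; simp)
    (le_trans (by gcongr; exact card_image_le) hs)
  refine ⟨φ, φ.injective, E, fun e he ↦ ?_, fun e he e' he' hne v hv hv' ↦ ?_⟩
  · obtain ⟨hEF, hsub, hW⟩ := hE e (SimpleGraph.mem_edgeFinset.2 he)
    refine ⟨hEF, hF _ hEF, fun a ↦ ⟨fun ha ↦ hsub ((hmem _ _).2 ⟨a, ha, rfl⟩), fun ha ↦ ?_⟩⟩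
    obtain ⟨b, hb, hba⟩ := (hmem _ _).1 (hW (mem_inter.2 ⟨ha, mem_image_of_mem _ (mem_univ a)⟩))
    exact φ.injective hba ▸ hb
  · have hv := hpair (by simpa using he) (by simpa using he') hne (mem_inter.2 ⟨hv, hv'⟩)
    obtain ⟨⟨a, ha, rfl⟩, b, hb, hba⟩ := (mem_inter.1 hv).imp (hmem _ _).1 (hmem _ _).1
    exact ⟨a, ha, φ.injective hba ▸ hb, rfl⟩

theorem containsLinearPath_of_containsBlowup_pathGraph {ℓ : ℕ} (hk : 3 ≤ k)
    (h : ContainsBlowup k (pathGraph (ℓ + 1)) F) : ContainsLinearPath k ℓ F := by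
  obtain ⟨φ, -, E, hE, hinter⟩ := h
  have hedge (i : Fin ℓ) : s(i.castSucc, i.succ) ∈ (pathGraph (ℓ + 1)).edgeSet := by
    simp [SimpleGraph.pathGraph_adj]
  have hne {i j : Fin ℓ} (hij : i ≠ j) : s(i.castSucc, i.succ) ≠ s(j.castSucc, j.succ) := by
    simp only [ne_eq, Sym2.eq_iff, Fin.ext_iff, Fin.val_castSucc, Fin.val_succ] at hij ⊢
    omega
  have hcommon {i j : Fin ℓ} (hij : i ≠ j) := hinter _ (hedge i) _ (hedge j) (hne hij)
  refine ⟨fun i ↦ E s(i.castSucc, i.succ), fun i j (hij : E _ = E _) ↦ ?_,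
    fun i ↦ (hE _ (hedge i)).1, fun i ↦ (hE _ (hedge i)).2.1, fun i j hij ↦ ?_, fun i j hij ↦ ?_⟩
  · by_contra hne
    have hsub : E s(i.castSucc, i.succ) ⊆ {φ i.castSucc, φ i.succ} := by
      intro v hv
      obtain ⟨a, ha, -, rfl⟩ := hcommon hne v hv (hij ▸ hv)
      rcases Sym2.mem_iff.1 ha with rfl | rfl <;> simp
    have hcard := (card_le_card hsub).trans card_le_two
    rw [(hE _ (hedge i)).2.1] at hcard
    omega
  · have hsucc : i.succ = j.castSucc := Fin.ext hij
    refine card_eq_one.2 ⟨φ i.succ, subset_antisymm (fun v hv ↦ ?_) (singleton_subset_iff.2 ?_)⟩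
    · obtain ⟨a, hai, haj, rfl⟩ := hcommon (by rintro rfl; omega) v (mem_inter.1 hv).1
        (mem_inter.1 hv).2
      suffices a = i.succ by simp [this]
      simp only [Sym2.mem_iff, Fin.ext_iff, Fin.val_castSucc, Fin.val_succ] at hai haj ⊢
      omega
    · refine mem_inter.2 ⟨((hE _ (hedge i)).2.2 _).1 ?_, ((hE _ (hedge j)).2.2 _).1 ?_⟩
      · exact Sym2.mem_mk_right _ _
      · exact hsucc ▸ Sym2.mem_mk_left _ _
  · refine disjoint_iff_inter_eq_empty.1 (disjoint_left.2 fun v hv hv' ↦ ?_)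
    obtain ⟨a, hai, haj, -⟩ := hcommon (by rintro rfl; omega) v hv hv'
    simp only [Sym2.mem_iff, Fin.ext_iff, Fin.val_castSucc, Fin.val_succ] at hai haj
    omega

end Blowup

section PathFreeGraph

variable {V : Type*} {G : SimpleGraph V} {ℓ : ℕ}

theorem pathGraph_isContained_of_forall_exists_walk {X : Set V} (hX : X.Nonempty)
    (hstep : ∀ v ∈ X, ∀ U : Finset V, v ∈ U → #U ≤ ℓ → ∃ w ∈ X, ∃ p : G.Walk v w,
      p.IsPath ∧ 0 < p.length ∧ ∀ x ∈ p.support.tail, x ∉ U) :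
    (pathGraph (ℓ + 1)).IsContained G := by
  classical
  suffices hlong : ∀ j ≤ ℓ, ∃ u, ∃ v ∈ X, ∃ p : G.Walk u v, p.IsPath ∧ j ≤ p.length by
    obtain ⟨u, v, -, p, hp, hlen⟩ := hlong ℓ le_rfl
    have htake := (hp.take ℓ).isContained_pathGraph
    rwa [p.take_length, min_eq_left hlen] at htake
  intro j
  induction j with
  | zero =>
    obtain ⟨v, hv⟩ := hX
    exact fun _ ↦ ⟨v, v, hv, .nil, .nil, le_rfl⟩
  | succ j ih =>
    intro hj
    obtain ⟨u, v, hv, p, hp, hlen⟩ := ih (by omega)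
    rcases hlen.eq_or_lt with hlen | hlen
    · have hcard : #p.support.toFinset ≤ ℓ :=
        (List.toFinset_card_le _).trans (by rw [p.length_support]; omega)
      obtain ⟨w, hw, r, hr, hrlen, hdisj⟩ := hstep v hv _ (by simp) hcard
      refine ⟨u, w, hw, p.append r, ?_, by rw [p.length_append]; omega⟩
      rw [SimpleGraph.Walk.isPath_def, SimpleGraph.Walk.support_append, List.nodup_append']
      exact ⟨hp.support_nodup, hr.support_nodup.tail,
        fun x hxp hxr ↦ hdisj x hxr (List.mem_toFinset.2 hxp)⟩
    · exact ⟨u, v, hv, p, hp, hlen⟩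

/-- Delete from `V₀` one after the other the points lying in few of the remaining sets. -/
theorem exists_subset_forall_lt_card_filter_mem [DecidableEq V] {ι : Type*} {S : ι → Finset V}
    {M : ℕ} {V₀ : Finset V} {I : Finset ι} (hS : ∀ i ∈ I, S i ⊆ V₀) (hcard : M * #V₀ < #I) :
    ∃ J ⊆ I, J.Nonempty ∧ ∀ i ∈ J, ∀ v ∈ S i, M < #{j ∈ J | v ∈ S j} := by
  induction V₀ using Finset.strongInduction generalizing I with
  | H V₀ ih =>
    by_cases h : ∀ i ∈ I, ∀ v ∈ S i, M < #{j ∈ I | v ∈ S j}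
    · exact ⟨I, Subset.rfl, card_pos.1 (by omega), h⟩
    push Not at h
    obtain ⟨i, hi, v, hv, hfew⟩ := h
    have hvV₀ := hS i hi hv
    have hcard' : M * #(V₀.erase v) < #{j ∈ I | v ∉ S j} := by
      have hsplit := card_filter_add_card_filter_not (s := I) (v ∈ S ·)
      rw [← card_erase_add_one hvV₀, mul_add_one] at hcard
      omega
    have hS' : ∀ j ∈ I.filter (v ∉ S ·), S j ⊆ V₀.erase v := fun j hj ↦
      have ⟨hjI, hvj⟩ := mem_filter.1 hj
      subset_erase.2 ⟨hS j hjI, hvj⟩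
    obtain ⟨J, hJ, hJ'⟩ := ih _ (erase_ssubset hvV₀) hS' hcard'
    exact ⟨J, hJ.trans (filter_subset _ _), hJ'⟩

theorem card_edgeFinset_le_of_pathGraph_free [Fintype V] [Fintype G.edgeSet]
    (hG : (pathGraph (ℓ + 1)).Free G) : #G.edgeFinset ≤ ℓ * Fintype.card V := by
  classical
  by_contra! hcard
  obtain ⟨D, hDG, ⟨e₀, he₀⟩, hdeg⟩ := exists_subset_forall_lt_card_filter_mem
    (S := Sym2.toFinset) (fun _ _ ↦ subset_univ _) hcard
  refine hG (pathGraph_isContained_of_forall_exists_walk (X := {v | ∃ e ∈ D, v ∈ e})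
    ⟨e₀.out.1, e₀, he₀, e₀.out_fst_mem⟩ ?_)
  rintro v ⟨e, he, hve⟩ U - hU
  have hlarge : ¬ {e ∈ D | v ∈ e.toFinset} ⊆ U.image (s(v, ·)) := fun hsub ↦
    ((hdeg e he v (by simpa using hve)).trans_le (card_le_card hsub)).not_ge
      (card_image_le.trans hU)
  obtain ⟨e', he', heU⟩ := not_subset.1 hlarge
  obtain ⟨heD, hve'⟩ := mem_filter.1 he'
  obtain ⟨w, rfl⟩ : ∃ w, e' = s(v, w) := Sym2.mem_toFinset.1 hve'
  have hadj : G.Adj v w := SimpleGraph.mem_edgeFinset.1 (hDG heD)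
  refine ⟨w, ⟨_, heD, by simp⟩, hadj.toWalk, by simp [hadj.ne], by simp, ?_⟩
  simpa using fun hw ↦ heU (mem_image_of_mem _ hw)

theorem sum_degree_le_of_pathGraph_free [Fintype V] [DecidableRel G.Adj]
    (hG : (pathGraph (ℓ + 1)).Free G) : ∑ v, G.degree v ≤ 2 * ℓ * Fintype.card V := by
  classical
  rw [G.sum_degrees_eq_twice_card_edges, mul_assoc]
  exact Nat.mul_le_mul_left 2 (card_edgeFinset_le_of_pathGraph_free hG)

theorem card_lt_of_completeBipartiteGraph_free {a b : ℕ}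
    (hG : (completeBipartiteGraph (Fin a) (Fin b)).Free G) {T Q : Finset V} (hT : #T = a)
    (hTQ : ∀ v ∈ T, ∀ x ∈ Q, G.Adj v x) : #Q < b := by
  by_contra! hb
  obtain ⟨R, hRQ, hR⟩ := exists_subset_card_eq hb
  refine hG (SimpleGraph.completeBipartiteGraph_isContained_iff.2
    ⟨T, R, by simpa using hT, by simpa using hR, fun v hv x hx ↦ hTQ v hv x (hRQ hx)⟩)

lemma card_le_of_completeBipartiteGraph_free {a b : ℕ} {S : V → Finset V} {J U : Finset V}
    (hG : (completeBipartiteGraph (Fin a) (Fin b)).Free G) (hS : ∀ y ∈ J, #(S y) = a)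
    (hadj : ∀ y ∈ J, ∀ v ∈ S y, G.Adj v y) (hU : ∀ y ∈ J, y ∈ U ∨ S y ⊆ U) :
    #J ≤ #U + 2 ^ #U * b := by
  classical
  have hsub : J ⊆ U ∪ (U.powersetCard a).biUnion fun T ↦ {y ∈ J | S y = T} := fun y hy ↦ by
    rcases hU y hy with hyU | hSU
    · exact mem_union_left _ hyU
    · exact mem_union_right _ (mem_biUnion.2
        ⟨S y, mem_powersetCard.2 ⟨hSU, hS y hy⟩, mem_filter.2 ⟨hy, rfl⟩⟩)
  have hfiber : ∀ T ∈ U.powersetCard a, #{y ∈ J | S y = T} ≤ b := fun T hT ↦ by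
    refine (card_lt_of_completeBipartiteGraph_free hG (mem_powersetCard.1 hT).2
      fun v hv y hy ↦ ?_).le
    obtain ⟨hyJ, rfl⟩ := mem_filter.1 hy
    exact hadj y hyJ v hv
  calc #J ≤ #U + #((U.powersetCard a).biUnion fun T ↦ {y ∈ J | S y = T}) :=
        (card_le_card hsub).trans (card_union_le _ _)
    _ ≤ #U + #(U.powersetCard a) * b := by gcongr; exact card_biUnion_le_card_mul _ _ _ hfiber
    _ ≤ #U + 2 ^ #U * b := by
        gcongr
        rw [card_powersetCard]
        exact Nat.choose_le_two_pow _ _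

theorem card_le_of_pathGraph_free_of_completeBipartiteGraph_free [DecidableRel G.Adj] {a q : ℕ}
    (hpath : (pathGraph (ℓ + 1)).Free G)
    (hbip : (completeBipartiteGraph (Fin (a + 1)) (Fin q)).Free G) {L X : Finset V}
    (hX : ∀ x ∈ X, a + 1 ≤ #{v ∈ L | G.Adj v x}) : #X ≤ (ℓ + 2 ^ ℓ * q) * #L := by
  classical
  by_contra! hcard
  choose! S hSsub hScard using fun x hx ↦ exists_subset_card_eq (hX x hx)
  obtain ⟨J, hJX, ⟨x₀, hx₀⟩, hdeg⟩ := exists_subset_forall_lt_card_filter_mem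
    (fun x hx ↦ (hSsub x hx).trans (filter_subset _ _)) hcard
  have hadj {x v : V} (hx : x ∈ J) (hv : v ∈ S x) : G.Adj v x :=
    (mem_filter.1 (hSsub x (hJX hx) hv)).2
  obtain ⟨v₀, hv₀⟩ : (S x₀).Nonempty := card_pos.1 (by rw [hScard x₀ (hJX hx₀)]; omega)
  refine hpath (pathGraph_isContained_of_forall_exists_walk (X := {v | ∃ x ∈ J, v ∈ S x})
    ⟨v₀, x₀, hx₀, hv₀⟩ ?_)
  rintro v ⟨x, hx, hvx⟩ U hvU hU
  obtain ⟨y, hy, hvy, hyU, hSU⟩ : ∃ y ∈ J, v ∈ S y ∧ y ∉ U ∧ ¬ S y ⊆ U := by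
    by_contra! hall
    refine (hdeg x hx v hvx).not_ge ((card_le_of_completeBipartiteGraph_free (U := U) hbip
      (fun y hy ↦ hScard y (hJX (mem_filter.1 hy).1)) (fun y hy _ ↦ hadj (mem_filter.1 hy).1)
      fun y hy ↦ ?_).trans (by gcongr; exact one_le_two))
    obtain ⟨hyJ, hvy⟩ := mem_filter.1 hy
    exact or_iff_not_imp_left.2 (hall y hyJ hvy)
  obtain ⟨w, hw, hwU⟩ := not_subset.1 hSU
  refine ⟨w, ⟨y, hy, hw⟩, .cons (hadj hy hvy) (hadj hy hw).symm.toWalk, ?_, by simp, ?_⟩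
  · simp [(hadj hy hw).ne.symm, (hadj hy hvy).ne, ne_of_mem_of_not_mem hvU hwU]
  · simp [hyU, hwU]

end PathFreeGraph

section InfClosed

variable {κ : Type*} [Fintype κ] [DecidableEq κ] {𝒜 : Set (Finset κ)}

lemma mem_of_infClosed_of_forall_notMem (hinf : InfClosed 𝒜) (huniv : univ ∈ 𝒜) {D : Finset κ}
    (hD : ∀ w ∉ D, ∃ J ∈ 𝒜, D ⊆ J ∧ w ∉ J) : D ∈ 𝒜 := by
  choose! J hJ hDJ hwJ using hD
  have hmem : Dᶜ.inf J ∈ 𝒜 := inf_mem 𝒜 huniv (fun _ hI _ hJ ↦ hinf hI hJ) _ _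
    fun w hw ↦ hJ w (mem_compl.1 hw)
  have hsub : Dᶜ.inf J ⊆ D := fun w hw ↦ by
    by_contra hwD
    exact hwJ w hwD (Finset.inf_le (f := J) (mem_compl.2 hwD) hw)
  exact subset_antisymm hsub (Finset.le_inf fun w hw ↦ hDJ w (mem_compl.1 hw)) ▸ hmem

lemma exists_notMem_of_compl_singleton_notMem
    (hcov : ∀ x y, x ≠ y → ∃ J ∈ 𝒜, J ≠ univ ∧ {x, y}ᶜ ⊆ J) {u w : κ} (hu : {u}ᶜ ∉ 𝒜)
    (huw : u ≠ w) : ∃ J ∈ 𝒜, {u, w}ᶜ ⊆ J ∧ w ∉ J := by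
  obtain ⟨J, hJ, hne, hsub⟩ := hcov u w huw
  refine ⟨J, hJ, hsub, fun hw ↦ ?_⟩
  have hcompl : ∀ v ≠ u, v ∈ J := fun v hvu ↦ by
    by_cases hvw : v = w
    · exact hvw ▸ hw
    · exact hsub (by simp [hvu, hvw])
  by_cases huJ : u ∈ J
  · exact hne (eq_univ_of_forall fun v ↦ by
      by_cases hvu : v = u
      · exact hvu ▸ huJ
      · exact hcompl v hvu)
  · have hJu : J = {u}ᶜ := by
      ext v
      rw [mem_compl, mem_singleton]
      exact ⟨fun hv ↦ ne_of_mem_of_not_mem hv huJ, hcompl v⟩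
    exact hu (hJu ▸ hJ)

theorem exists_star_or_exists_pair_of_infClosed (hinf : InfClosed 𝒜) (huniv : univ ∈ 𝒜)
    (hκ : 4 ≤ Fintype.card κ) (hcov : ∀ x y, x ≠ y → ∃ J ∈ 𝒜, J ≠ univ ∧ {x, y}ᶜ ⊆ J) :
    (∃ a, ∀ x, x ≠ a → {a, x} ∈ 𝒜) ∨ ∃ z w, z ≠ w ∧ {z} ∈ 𝒜 ∧ {w} ∈ 𝒜 ∧ {z, w} ∈ 𝒜 := by
  by_cases hstar : ∃ a, ∀ x, x ≠ a → {x}ᶜ ∈ 𝒜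
  · obtain ⟨a, ha⟩ := hstar
    refine .inl ⟨a, fun x _ ↦ mem_of_infClosed_of_forall_notMem hinf huniv fun w hw ↦ ?_⟩
    simp only [mem_insert, mem_singleton, not_or] at hw
    exact ⟨{w}ᶜ, ha w hw.1, by simp [subset_iff, Ne.symm hw.1, Ne.symm hw.2], by simp⟩
  push Not at hstar
  obtain ⟨x, -, hx⟩ := hstar (Fintype.card_pos_iff.1 (by omega)).some
  obtain ⟨y, hyx, hy⟩ := hstar x
  have hmem {D : Finset κ} (hxD : x ∉ D) (hyD : y ∉ D) : D ∈ 𝒜 := by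
    refine mem_of_infClosed_of_forall_notMem hinf huniv fun w hw ↦ ?_
    obtain ⟨u, huD, hu, huw⟩ : ∃ u, u ∉ D ∧ {u}ᶜ ∉ 𝒜 ∧ u ≠ w := by
      by_cases hxw : x = w
      · exact ⟨y, hyD, hy, hxw ▸ hyx⟩
      · exact ⟨x, hxD, hx, hxw⟩
    obtain ⟨J, hJ, hsub, hwJ⟩ :=
      exists_notMem_of_compl_singleton_notMem hcov hu huw
    refine ⟨J, hJ, fun v hv ↦ hsub ?_, hwJ⟩
    simp [ne_of_mem_of_not_mem hv huD, ne_of_mem_of_not_mem hv hw]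
  have hcard : 1 < #({x, y}ᶜ : Finset κ) := by
    rw [card_compl, card_pair hyx.symm]
    omega
  obtain ⟨z, hz, w, hw, hzw⟩ := one_lt_card.1 hcard
  simp only [mem_compl, mem_insert, mem_singleton, not_or] at hz hw
  refine .inr ⟨z, w, hzw, hmem ?_ ?_, hmem ?_ ?_, hmem ?_ ?_⟩ <;> grind

end InfClosed

section Rainbow

variable {V κ : Type*} {χ : V → κ} {E E' : Finset V} {I : Finset κ} {G H : Finset (Finset V)}

/-- A set of vertices is rainbow if the colouring `χ` takes every colour exactly once on it. -/
def IsRainbow (χ : V → κ) (E : Finset V) : Prop := Set.BijOn χ E Set.univ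

lemma IsRainbow.exists_mem_eq (hE : IsRainbow χ E) (c : κ) : ∃ v ∈ E, χ v = c :=
  hE.surjOn (Set.mem_univ c)

lemma IsRainbow.card_eq [Fintype κ] (hE : IsRainbow χ E) : #E = Fintype.card κ :=
  Set.BijOn.finsetCard_eq χ (t := univ) (by rwa [coe_univ])

variable [DecidableEq κ]

/-- The vertices of `E` with colours in `I`; for rainbow `E`, this identifies the subsets of `E`
with the sets of colours. -/
def colorPart (χ : V → κ) (I : Finset κ) (E : Finset V) : Finset V := {v ∈ E | χ v ∈ I}

lemma mem_colorPart {v : V} : v ∈ colorPart χ I E ↔ v ∈ E ∧ χ v ∈ I := mem_filter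

lemma colorPart_subset : colorPart χ I E ⊆ E := filter_subset _ _

lemma IsRainbow.card_colorPart (hE : IsRainbow χ E) (I : Finset κ) : #(colorPart χ I E) = #I := by
  refine Set.BijOn.finsetCard_eq χ ⟨fun v hv ↦ (mem_colorPart.1 hv).2,
    hE.injOn.mono (mod_cast colorPart_subset), fun c hc ↦ ?_⟩
  obtain ⟨v, hv, rfl⟩ := hE.exists_mem_eq c
  exact ⟨v, mem_colorPart.2 ⟨hv, hc⟩, rfl⟩

lemma IsRainbow.colorPart_eq_of_subset (hE : IsRainbow χ E) (hE' : IsRainbow χ E')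
    (hsub : colorPart χ I E ⊆ E') : colorPart χ I E = colorPart χ I E' :=
  eq_of_subset_of_card_le (fun _ hv ↦ mem_colorPart.2 ⟨hsub hv, (mem_colorPart.1 hv).2⟩)
    (by rw [hE.card_colorPart, hE'.card_colorPart])

lemma IsRainbow.colorPart_pair [DecidableEq V] (hE : IsRainbow χ E) {u v : V} (hu : u ∈ E)
    (hv : v ∈ E) : colorPart χ {χ u, χ v} E = {u, v} := by
  ext x
  simp only [mem_colorPart, mem_insert, mem_singleton]
  constructor
  · rintro ⟨hx, hxu | hxv⟩
    · exact .inl (hE.injOn hx hu hxu)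
    · exact .inr (hE.injOn hx hv hxv)
  · rintro (rfl | rfl)
    · exact ⟨hu, .inl rfl⟩
    · exact ⟨hv, .inr rfl⟩

lemma IsRainbow.colorPart_singleton (hE : IsRainbow χ E) {v : V} (hv : v ∈ E) :
    colorPart χ {χ v} E = {v} := by
  classical
  simpa using hE.colorPart_pair hv hv

end Rainbow

section RandomColoring

variable {V κ : Type*} [Finite V] [Fintype κ]

/-- Recolouring `E` in a fixed rainbow way loses only the original colours of `E`. -/
lemma card_fun_le_mul_card_isRainbow {E : Finset V} (hE : #E = Fintype.card κ) :
    Nat.card (V → κ) ≤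
      Fintype.card κ ^ Fintype.card κ * Nat.card {χ : V → κ // IsRainbow χ E} := by
  classical
  obtain ⟨e⟩ : Nonempty (E ≃ κ) := Fintype.card_eq.1 (by simpa using hE)
  let recolor (χ : V → κ) (v : V) : κ := if hv : v ∈ E then e ⟨v, hv⟩ else χ v
  have hrecolor (χ : V → κ) : IsRainbow (recolor χ) E := by
    refine ⟨fun _ _ ↦ Set.mem_univ _, fun u hu v hv huv ↦ ?_, fun c _ ↦
      ⟨e.symm c, (e.symm c).2, by simp [recolor]⟩⟩
    rw [mem_coe] at hu hv
    simpa [recolor, hu, hv] using huv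
  have hinj : Function.Injective fun χ : V → κ ↦
      ((fun v : E ↦ χ v, ⟨recolor χ, hrecolor χ⟩) : (E → κ) × {χ : V → κ // IsRainbow χ E}) := by
    intro χ χ' h
    simp only [Prod.mk.injEq, Subtype.mk.injEq] at h
    ext v
    by_cases hv : v ∈ E
    · exact congr_fun h.1 ⟨v, hv⟩
    · simpa [recolor, hv] using congr_fun h.2 v
  simpa [hE] using Nat.card_le_card_of_injective _ hinj

theorem exists_coloring_card_le_mul_card_isRainbow [Nonempty κ] {G : Finset (Finset V)}
    (hG : ∀ E ∈ G, #E = Fintype.card κ) : ∃ χ : V → κ, ∃ H ⊆ G, (∀ E ∈ H, IsRainbow χ E) ∧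
      #G ≤ Fintype.card κ ^ Fintype.card κ * #H := by
  classical
  have := Fintype.ofFinite V
  set K := Fintype.card κ ^ Fintype.card κ
  have hsum : ∑ _χ : V → κ, #G ≤ ∑ χ : V → κ, K * #{E ∈ G | IsRainbow χ E} := calc
    _ = ∑ _E ∈ G, Nat.card (V → κ) := by
      rw [sum_const, sum_const, card_univ, Nat.card_eq_fintype_card, smul_eq_mul, smul_eq_mul,
        mul_comm]
    _ ≤ ∑ E ∈ G, K * #{χ : V → κ | IsRainbow χ E} := by
      refine sum_le_sum fun E hE ↦ (card_fun_le_mul_card_isRainbow (hG E hE)).trans_eq ?_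
      rw [Nat.card_eq_fintype_card, Fintype.card_subtype]
    _ = _ := by
      rw [← mul_sum, ← mul_sum]
      exact congr_arg (K * ·) (sum_card_bipartiteAbove_eq_sum_card_bipartiteBelow _)
  obtain ⟨χ, -, hχ⟩ := exists_le_of_sum_le univ_nonempty hsum
  exact ⟨χ, _, filter_subset _ _, fun E hE ↦ (mem_filter.1 hE).2, hχ⟩

end RandomColoring

section Homogeneous

variable {V κ : Type*} [DecidableEq κ] {s : ℕ} {χ : V → κ} {I : Finset κ}
  {G H : Finset (Finset V)}

/-- The colour set `I` is forcing for `H` if the part of a member of `H` with colours in `I`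
determines a further vertex of that member. This is the opposite extreme to being a kernel type. -/
def IsForcing (χ : V → κ) (H : Finset (Finset V)) (I : Finset κ) : Prop :=
  ∀ E ∈ H, ∃ y ∈ E, χ y ∉ I ∧ ∀ E' ∈ H, colorPart χ I E ⊆ E' → y ∈ E'

lemma IsForcing.anti (h : IsForcing χ G I) (hHG : H ⊆ G) : IsForcing χ H I := fun E hE ↦
  let ⟨y, hy, hyI, hforce⟩ := h E (hHG hE)
  ⟨y, hy, hyI, fun E' hE' ↦ hforce E' (hHG hE')⟩

variable [DecidableEq V]

/-- The colour sets `I` whose part of every member of `H` is an `s`-kernel of `H`. -/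
def kernelTypes (s : ℕ) (χ : V → κ) (H : Finset (Finset V)) : Set (Finset κ) :=
  {I | ∀ E ∈ H, IsKernel s H (colorPart χ I E)}

/-- Füredi's homogeneous families: rainbow families in which each set of colours is either a
kernel type or forcing. -/
structure IsHomogeneous (s : ℕ) (χ : V → κ) (H : Finset (Finset V)) : Prop where
  isRainbow : ∀ E ∈ H, IsRainbow χ E
  mem_kernelTypes_or_isForcing : ∀ I, I ∈ kernelTypes s χ H ∨ IsForcing χ H I

lemma IsForcing.union (hG : IsForcing χ G I) (hH : IsForcing χ H I)
    (hrainbow : ∀ E ∈ G ∪ H, IsRainbow χ E)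
    (hne : ∀ E ∈ G, ∀ E' ∈ H, colorPart χ I E ≠ colorPart χ I E') : IsForcing χ (G ∪ H) I := by
  intro E hE
  have hpart (E') (hE' : E' ∈ G ∪ H) (hsub : colorPart χ I E ⊆ E') :=
    (hrainbow E hE).colorPart_eq_of_subset (hrainbow E' hE') hsub
  rcases mem_union.1 hE with hEG | hEH
  · obtain ⟨y, hy, hyI, hforce⟩ := hG E hEG
    refine ⟨y, hy, hyI, fun E' hE' hsub ↦ hforce E' ((mem_union.1 hE').resolve_right ?_) hsub⟩
    exact fun hE'H ↦ hne E hEG E' hE'H (hpart E' hE' hsub)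
  · obtain ⟨y, hy, hyI, hforce⟩ := hH E hEH
    refine ⟨y, hy, hyI, fun E' hE' hsub ↦ hforce E' ((mem_union.1 hE').resolve_left ?_) hsub⟩
    exact fun hE'G ↦ hne E' hE'G E hEH (hpart E' hE' hsub).symm

/-- The members of `G` through a non-kernel `B` are met outside `B` by a set of `s` vertices, and
are classified by the vertex of that set they contain. -/
lemma exists_label_isForcing_of_not_isKernel {E₀ : Finset V} (hG : ∀ E ∈ G, IsRainbow χ E)
    (hE₀ : E₀ ∈ G) (hker : ¬ IsKernel s G (colorPart χ I E₀)) :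
    ∃ f : Finset V → ℕ, (∀ E ∈ G, colorPart χ I E₀ ⊆ E → f E < s) ∧
      ∀ c, IsForcing χ {E ∈ G | colorPart χ I E₀ ⊆ E ∧ f E = c} I := by
  set B := colorPart χ I E₀
  simp only [IsKernel, not_forall, not_exists, not_and, not_subset] at hker
  obtain ⟨U, hU, hmeet⟩ := hker
  obtain ⟨g, hg, hinj⟩ := U.finite_toSet.exists_injOn_of_encard_le
    (t := (range s : Set ℕ)) (by simpa only [Set.encard_coe_eq_coe_finsetCard, card_range,
      Nat.cast_le] using hU)
  have hlabel : ∀ E ∈ G, B ⊆ E → ∃ c, ∃ y ∈ E, y ∈ U ∧ y ∉ B ∧ g y = c := fun E hE hBE ↦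
    let ⟨y, hy, hyB⟩ := hmeet E hE hBE
    ⟨g y, y, (mem_inter.1 hy).1, (mem_inter.1 hy).2, hyB, rfl⟩
  choose! f hf using hlabel
  refine ⟨f, fun E hE hBE ↦ ?_, fun c E hE ↦ ?_⟩
  · obtain ⟨y, -, hyU, -, hgy⟩ := hf E hE hBE
    simpa [← hgy] using hg hyU
  · obtain ⟨hEG, hBE, rfl⟩ := mem_filter.1 hE
    obtain ⟨y, hy, hyU, hyB, hgy⟩ := hf E hEG hBE
    have hpart : B = colorPart χ I E := (hG E₀ hE₀).colorPart_eq_of_subset (hG E hEG) hBE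
    refine ⟨y, hy, fun hyI ↦ hyB (hpart ▸ mem_colorPart.2 ⟨hy, hyI⟩), fun E' hE' _ ↦ ?_⟩
    obtain ⟨hEG', hBE', hfE'⟩ := mem_filter.1 hE'
    obtain ⟨y', hy', hyU', -, hgy'⟩ := hf E' hEG' hBE'
    exact hinj hyU' hyU (hgy'.trans (hfE'.trans hgy.symm)) ▸ hy'

/-- As long as some part of a member is not a kernel of the current family, remove all members
through that part, and label them by its type and by `exists_label_isForcing_of_not_isKernel`. -/
theorem exists_kernelTypes_and_label_isForcing (𝒜 : Finset (Finset κ))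
    (hG : ∀ E ∈ G, IsRainbow χ E) :
    ∃ H ⊆ G, (∀ I ∈ 𝒜, I ∈ kernelTypes s χ H) ∧ ∃ label : Finset V → Finset κ × ℕ,
      (∀ E ∈ G \ H, label E ∈ 𝒜 ×ˢ range s) ∧
      ∀ I c, IsForcing χ {E ∈ G \ H | label E = (I, c)} I := by
  induction G using Finset.strongInduction with
  | H G ih =>
    by_cases hker : ∀ I ∈ 𝒜, I ∈ kernelTypes s χ G
    · exact ⟨G, Subset.rfl, hker, fun _ ↦ (∅, 0), by simp, by simp [IsForcing]⟩
    simp only [kernelTypes, Set.mem_ofPred_eq, not_forall] at hker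
    obtain ⟨I₀, hI₀, E₀, hE₀, hker⟩ := hker
    obtain ⟨f, hf, hfforce⟩ := exists_label_isForcing_of_not_isKernel hG hE₀ hker
    set B := colorPart χ I₀ E₀
    have hssub : {E ∈ G | ¬ B ⊆ E} ⊂ G := filter_ssubset.2 ⟨E₀, hE₀, by simp [B, colorPart_subset]⟩
    obtain ⟨H, hHG, hH, label, hlabel, hforce⟩ :=
      ih _ hssub fun E hE ↦ hG E (filter_subset _ _ hE)
    refine ⟨H, hHG.trans hssub.subset, hH, fun E ↦ if B ⊆ E then (I₀, f E) else label E,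
      fun E hE ↦ ?_, fun I c ↦ ?_⟩
    · by_cases hBE : B ⊆ E
      · simpa [hBE, hI₀] using hf E (mem_sdiff.1 hE).1 hBE
      · simpa [hBE] using hlabel E (by simp_all)
    by_cases hI : I = I₀
    · subst hI
      refine ((hfforce c).union (hforce I c) (fun E hE ↦ hG E (by grind)) ?_).anti (by grind)
      intro E hE E' hE' heq
      have hBE : B = colorPart χ I E :=
        (hG E₀ hE₀).colorPart_eq_of_subset (hG E (by grind)) (by grind)
      have hBE' : B ⊆ E' := hBE.trans heq ▸ colorPart_subset
      grind
    · exact (hforce I c).anti (by grind)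

/-- The constant in Füredi's theorem for `d` sets of colours. -/
def homogeneityConst (s : ℕ) : ℕ → ℕ
  | 0 => 1
  | d + 1 => 1 + (d + 1) * s * homogeneityConst s d

theorem card_le_homogeneityConst_mul {b d : ℕ} (𝒜 : Finset (Finset κ)) (h𝒜 : #𝒜 ≤ d)
    (hG : ∀ E ∈ G, IsRainbow χ E) (hforce : ∀ I ∉ 𝒜, IsForcing χ G I)
    (hb : ∀ H ⊆ G, IsHomogeneous s χ H → #H ≤ b) : #G ≤ homogeneityConst s d * b := by
  induction d generalizing 𝒜 G with
  | zero =>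
    obtain rfl : 𝒜 = ∅ := card_eq_zero.1 (by omega)
    simpa [homogeneityConst] using hb G Subset.rfl ⟨hG, fun I ↦ .inr (hforce I (notMem_empty I))⟩
  | succ d ih =>
    obtain ⟨H, hHG, hker, label, hlabel, hclass⟩ := exists_kernelTypes_and_label_isForcing 𝒜 hG
    have hH : #H ≤ b := hb H hHG
      ⟨fun E hE ↦ hG E (hHG hE), fun I ↦ (em (I ∈ 𝒜)).imp (hker I) fun hI ↦ (hforce I hI).anti hHG⟩
    have hfiber : ∀ p ∈ 𝒜 ×ˢ range s, #{E ∈ G \ H | label E = p} ≤ homogeneityConst s d * b := by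
      rintro ⟨I, c⟩ hp
      have hsub : {E ∈ G \ H | label E = (I, c)} ⊆ G := (filter_subset _ _).trans sdiff_subset
      refine ih (𝒜.erase I) ?_ (fun E hE ↦ hG E (hsub hE)) (fun J hJ ↦ ?_)
        fun H' hH' ↦ hb H' (hH'.trans hsub)
      · rw [card_erase_of_mem (mem_product.1 hp).1]
        omega
      · by_cases hJI : J = I
        · exact hJI ▸ hclass I c
        · exact (hforce J fun hJ𝒜 ↦ hJ (mem_erase.2 ⟨hJI, hJ𝒜⟩)).anti hsub
    calc #G
      _ = #H + #(G \ H) := by rw [add_comm, card_sdiff_add_card_eq_card hHG]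
      _ ≤ b + homogeneityConst s d * b * #(𝒜 ×ˢ range s) :=
        add_le_add hH (card_le_mul_card_image_of_maps_to hlabel _ hfiber)
      _ ≤ b + homogeneityConst s d * b * ((d + 1) * s) := by
        rw [card_product, card_range]
        gcongr
      _ = homogeneityConst s (d + 1) * b := by rw [homogeneityConst]; ring

variable [Finite V] [Fintype κ] [Nonempty κ]

theorem exists_isHomogeneous_card_le_mul (hG : ∀ E ∈ G, #E = Fintype.card κ) :
    ∃ χ : V → κ, ∃ H ⊆ G, IsHomogeneous s χ H ∧
      #G ≤ Fintype.card κ ^ Fintype.card κ * homogeneityConst s (2 ^ Fintype.card κ) * #H := by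
  classical
  obtain ⟨χ, R, hRG, hR, hcard⟩ := exists_coloring_card_le_mul_card_isRainbow hG
  obtain ⟨H, hH, hmax⟩ := exists_max_image {H ∈ R.powerset | IsHomogeneous s χ H} card
    ⟨∅, by simpa using ⟨by simp, fun I ↦ .inr (by simp [IsForcing])⟩⟩
  simp only [mem_filter, mem_powerset, and_imp] at hH hmax
  refine ⟨χ, H, hH.1.trans hRG, hH.2, hcard.trans ?_⟩
  rw [mul_assoc]
  gcongr
  exact card_le_homogeneityConst_mul univ (by simp) hR (by simp) hmax

end Homogeneous

section Forcing

variable {V κ : Type*} [Fintype κ] [DecidableEq κ] {χ : V → κ} {H : Finset (Finset V)}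

lemma subset_of_colorPart_subset {I : Finset κ} (hH : ∀ E ∈ H, IsRainbow χ E)
    (hforce : ∀ J, I ⊆ J → J ≠ univ → IsForcing χ H J) {E E' : Finset V} (hE : E ∈ H)
    (hE' : E' ∈ H) (hI : colorPart χ I E ⊆ E') : E ⊆ E' := by
  classical
  set J := (E ∩ E').image χ
  have hIJ : I ⊆ J := fun c hc ↦ by
    obtain ⟨v, hv, rfl⟩ := (hH E hE).exists_mem_eq c
    exact mem_image_of_mem _ (mem_inter.2 ⟨hv, hI (mem_colorPart.2 ⟨hv, hc⟩)⟩)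
  have hJE' : colorPart χ J E ⊆ E' := fun v hv ↦ by
    obtain ⟨hvE, hvJ⟩ := mem_colorPart.1 hv
    obtain ⟨w, hw, hwv⟩ := mem_image.1 hvJ
    obtain ⟨hwE, hwE'⟩ := mem_inter.1 hw
    exact (hH E hE).injOn hwE hvE hwv ▸ hwE'
  have hJ : J = univ := by
    by_contra hJ
    obtain ⟨y, hy, hyJ, hall⟩ := hforce J hIJ hJ E hE
    exact hyJ (mem_image_of_mem _ (mem_inter.2 ⟨hy, hall E' hE' hJE'⟩))
  exact fun v hv ↦ hJE' (mem_colorPart.2 ⟨hv, hJ ▸ mem_univ _⟩)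

lemma card_le_choose_of_forall_isForcing [Fintype V] {I : Finset κ}
    (hH : ∀ E ∈ H, IsRainbow χ E) (hforce : ∀ J, I ⊆ J → J ≠ univ → IsForcing χ H J) :
    #H ≤ (Fintype.card V).choose #I := by
  rw [← card_univ, ← card_powersetCard]
  refine card_le_card_of_injOn (colorPart χ I) (fun E hE ↦ ?_) fun E hE E' hE' heq ↦ ?_
  · exact mem_powersetCard.2 ⟨subset_univ _, (hH E hE).card_colorPart I⟩
  · exact subset_antisymm
      (subset_of_colorPart_subset hH hforce hE hE' (heq ▸ colorPart_subset))
      (subset_of_colorPart_subset hH hforce hE' hE (heq ▸ colorPart_subset))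

end Forcing

section HomogeneousStructure

variable {V κ : Type*} [DecidableEq κ] {s ℓ : ℕ} {χ : V → κ} {F H : Finset (Finset V)}

/-- The vertex `a` is a centre of `E` if it is joined in `G` to all other vertices of `E`. -/
def IsCenter (G : SimpleGraph V) (E : Finset V) (a : V) : Prop :=
  a ∈ E ∧ ∀ x ∈ E, x ≠ a → G.Adj a x

variable [DecidableEq V]

lemma exists_isCenter_of_star_mem_kernelTypes {E : Finset V} (hrainbow : IsRainbow χ E)
    (hE : E ∈ H) {c : κ} (hc : ∀ d, d ≠ c → {c, d} ∈ kernelTypes s χ H) :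
    ∃ a, IsCenter (kernelGraph s H) E a := by
  obtain ⟨a, ha, rfl⟩ := hrainbow.exists_mem_eq c
  refine ⟨a, ha, fun x hx hxa ↦ ⟨hxa.symm, ?_⟩⟩
  have hker := hc (χ x) (fun h ↦ hxa (hrainbow.injOn hx ha h)) E hE
  rwa [hrainbow.colorPart_pair ha hx] at hker

lemma exists_adj_kernelGraph_of_mem_kernelTypes {z w : κ} (hH : ∀ E ∈ H, IsRainbow χ E)
    (hzw : z ≠ w) (hz : {z} ∈ kernelTypes s χ H) (hpair : {z, w} ∈ kernelTypes s χ H)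
    {E : Finset V} (hE : E ∈ H) {v : V} (hv : v ∈ E) (hvz : χ v = z) {U : Finset V}
    (hU : #U ≤ s) : ∃ E' ∈ H, ∃ x ∈ E', χ x = w ∧ x ∉ U ∧ (kernelGraph s H).Adj v x := by
  subst hvz
  have hker := hz E hE
  rw [(hH E hE).colorPart_singleton hv] at hker
  obtain ⟨E', hE', hvE', havoid⟩ := hker U hU
  rw [singleton_subset_iff] at hvE'
  obtain ⟨x, hx, rfl⟩ := (hH E' hE').exists_mem_eq w
  have hvx : v ≠ x := fun h ↦ hzw (h ▸ rfl)
  refine ⟨E', hE', x, hx, rfl, fun hxU ↦ ?_, hvx, ?_⟩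
  · exact hvx.symm (mem_singleton.1 (havoid (mem_inter.2 ⟨hx, hxU⟩)))
  · have hker := hpair E' hE'
    rwa [(hH E' hE').colorPart_pair hvE' hx] at hker

theorem pathGraph_isContained_of_mem_kernelTypes {z w : κ} (hH : ∀ E ∈ H, IsRainbow χ E)
    (hne : H.Nonempty) (hs : ℓ ≤ s) (hzw : z ≠ w) (hz : {z} ∈ kernelTypes s χ H)
    (hw : {w} ∈ kernelTypes s χ H) (hpair : {z, w} ∈ kernelTypes s χ H) :
    (pathGraph (ℓ + 1)).IsContained (kernelGraph s H) := by
  obtain ⟨E₀, hE₀⟩ := hne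
  obtain ⟨v₀, hv₀, hv₀z⟩ := (hH E₀ hE₀).exists_mem_eq z
  refine pathGraph_isContained_of_forall_exists_walk
    (X := {v | ∃ E ∈ H, v ∈ E ∧ (χ v = z ∨ χ v = w)}) ⟨v₀, E₀, hE₀, hv₀, .inl hv₀z⟩ ?_
  rintro v ⟨E, hE, hv, hvc⟩ U - hU
  obtain ⟨E', hE', x, hx, hxc, hxU, hadj⟩ : ∃ E' ∈ H, ∃ x ∈ E',
      (χ x = z ∨ χ x = w) ∧ x ∉ U ∧ (kernelGraph s H).Adj v x := by
    rcases hvc with hvz | hvw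
    · obtain ⟨E', hE', x, hx, hxw, h⟩ := exists_adj_kernelGraph_of_mem_kernelTypes hH hzw hz hpair
        hE hv hvz (hU.trans hs)
      exact ⟨E', hE', x, hx, .inr hxw, h⟩
    · obtain ⟨E', hE', x, hx, hxz, h⟩ := exists_adj_kernelGraph_of_mem_kernelTypes hH hzw.symm hw
        (pair_comm z w ▸ hpair) hE hv hvw (hU.trans hs)
      exact ⟨E', hE', x, hx, .inl hxz, h⟩
  exact ⟨x, ⟨E', hE', hx, hxc⟩, hadj.toWalk, by simp [hadj.ne], by simp, by simpa using hxU⟩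

variable [Fintype κ]

lemma univ_mem_kernelTypes : univ ∈ kernelTypes s χ H := fun E hE U _ ↦
  ⟨E, hE, colorPart_subset, by simp [colorPart]⟩

/-- If `E₁` and `E₂` extend the parts `I` and `J` of a member without further intersections, then
they share nothing outside the part `I ∩ J`, so that `I ∩ J` is not forcing. -/
theorem IsHomogeneous.infClosed_kernelTypes (hH : IsHomogeneous s χ H) (hne : H.Nonempty)
    (hs : 2 * Fintype.card κ ≤ s) : InfClosed (kernelTypes s χ H) := by
  intro I hI J hJ
  refine (hH.mem_kernelTypes_or_isForcing _).resolve_right fun hforce ↦ ?_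
  obtain ⟨E, hE⟩ := hne
  have hcard {E : Finset V} (hE : E ∈ H) : #E = Fintype.card κ := (hH.isRainbow E hE).card_eq
  obtain ⟨E₁, hE₁, hIE₁, havoid₁⟩ := hI E hE E (by rw [hcard hE]; omega)
  obtain ⟨E₂, hE₂, hJE₂, havoid₂⟩ := hJ E hE (E ∪ E₁)
    ((card_union_le _ _).trans (by rw [hcard hE, hcard hE₁]; omega))
  obtain ⟨y, hy, hyIJ, hall⟩ := hforce E₁ hE₁
  have hsub : colorPart χ (I ∩ J) E₁ ⊆ E₂ := fun v hv ↦ by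
    obtain ⟨hvE₁, hvI, hvJ⟩ : v ∈ E₁ ∧ χ v ∈ I ∧ χ v ∈ J := by simpa [mem_colorPart] using hv
    have hvE : v ∈ colorPart χ I E :=
      (hH.isRainbow E hE).colorPart_eq_of_subset (hH.isRainbow E₁ hE₁) hIE₁ ▸
        mem_colorPart.2 ⟨hvE₁, hvI⟩
    exact hJE₂ (mem_colorPart.2 ⟨colorPart_subset hvE, hvJ⟩)
  obtain ⟨hyE, hyJ⟩ := mem_colorPart.1
    (havoid₂ (mem_inter.2 ⟨hall E₂ hE₂ hsub, mem_union_right _ hy⟩))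
  have hyI := (mem_colorPart.1 (havoid₁ (mem_inter.2 ⟨hy, hyE⟩))).2
  exact hyIJ (mem_inter.2 ⟨hyI, hyJ⟩)

theorem IsHomogeneous.card_le_of_forall_not_isCenter [Fintype V] (hH : IsHomogeneous s χ H)
    (hκ : 4 ≤ Fintype.card κ) (hs : 2 * Fintype.card κ ≤ s) (hℓ : ℓ ≤ s)
    (hpath : (pathGraph (ℓ + 1)).Free (kernelGraph s H))
    (hcenter : ∀ E ∈ H, ∀ a, ¬ IsCenter (kernelGraph s H) E a) :
    #H ≤ Fintype.card V ^ (Fintype.card κ - 2) := by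
  obtain rfl | hne := H.eq_empty_or_nonempty
  · simp
  by_cases hcov : ∀ x y, x ≠ y → ∃ J ∈ kernelTypes s χ H, J ≠ univ ∧ {x, y}ᶜ ⊆ J
  · exfalso
    rcases exists_star_or_exists_pair_of_infClosed (hH.infClosed_kernelTypes hne hs)
      univ_mem_kernelTypes hκ hcov with ⟨c, hc⟩ | ⟨z, w, hzw, hz, hw, hpair⟩
    · obtain ⟨E, hE⟩ := hne
      obtain ⟨a, ha⟩ := exists_isCenter_of_star_mem_kernelTypes (hH.isRainbow E hE) hE hc
      exact hcenter E hE a ha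
    · exact hpath (pathGraph_isContained_of_mem_kernelTypes hH.isRainbow hne hℓ hzw hz hw hpair)
  · push Not at hcov
    obtain ⟨x, y, hxy, hnot⟩ := hcov
    refine (card_le_choose_of_forall_isForcing (I := {x, y}ᶜ) hH.isRainbow fun J hIJ hJ ↦ ?_).trans
      ?_
    · exact (hH.mem_kernelTypes_or_isForcing J).resolve_left fun hJ' ↦ hnot J hJ' hJ hIJ
    · rw [card_compl, card_pair hxy]
      exact Nat.choose_le_pow _ _

theorem card_le_of_forall_not_isCenter [Fintype V] {k : ℕ} (hk : 4 ≤ k) (hs : 2 * k ≤ s)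
    (hℓ : ℓ ≤ s) (hpath : (pathGraph (ℓ + 1)).Free (kernelGraph s F)) (hHF : H ⊆ F)
    (hH : ∀ E ∈ H, #E = k) (hcenter : ∀ E ∈ H, ∀ a, ¬ IsCenter (kernelGraph s F) E a) :
    #H ≤ k ^ k * homogeneityConst s (2 ^ k) * Fintype.card V ^ (k - 2) := by
  have : NeZero k := ⟨by omega⟩
  obtain ⟨χ, R, hRH, hR, hcard⟩ := exists_isHomogeneous_card_le_mul (κ := Fin k) (s := s)
    (by simpa using hH)
  simp only [Fintype.card_fin] at hcard
  have hmono := kernelGraph_mono (s := s) (hRH.trans hHF)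
  have hRcard := hR.card_le_of_forall_not_isCenter (by simpa) (by simpa) hℓ
    (fun h ↦ hpath (h.mono_right hmono))
    fun E hE a ha ↦ hcenter E (hRH hE) a ⟨ha.1, fun x hx hxa ↦ hmono (ha.2 x hx hxa)⟩
  rw [Fintype.card_fin] at hRcard
  exact hcard.trans (Nat.mul_le_mul_left _ hRcard)

end HomogeneousStructure

section EraseCounting

variable {V : Type*} [DecidableEq V] {F : Finset (Finset V)} {L S X : Finset V} {j : ℕ}

lemma card_le_sum_card_of_forall_erase_mem {T : V → Finset (Finset V)}
    (hF : ∀ E ∈ F, ∃ a ∈ S, a ∈ E ∧ E.erase a ∈ T a) : #F ≤ ∑ a ∈ S, #(T a) := by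
  have hsub : F ⊆ S.biUnion fun a ↦ (T a).image (insert a) := fun E hE ↦ by
    obtain ⟨a, haS, haE, hT⟩ := hF E hE
    exact mem_biUnion.2 ⟨a, haS, mem_image.2 ⟨_, hT, insert_erase haE⟩⟩
  exact (card_le_card hsub).trans (card_biUnion_le.trans (sum_le_sum fun a _ ↦ card_image_le))

lemma card_le_sum_card_pow_of_forall_erase_subset {N : V → Finset V}
    (hcard : ∀ E ∈ F, #E = j + 1) (hF : ∀ E ∈ F, ∃ a ∈ S, a ∈ E ∧ E.erase a ⊆ N a) :
    #F ≤ ∑ a ∈ S, #(N a) ^ j := by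
  refine (card_le_sum_card_of_forall_erase_mem (T := fun a ↦ (N a).powersetCard j)
    fun E hE ↦ ?_).trans (sum_le_sum fun a _ ↦ ?_)
  · obtain ⟨a, haS, haE, hN⟩ := hF E hE
    exact ⟨a, haS, haE, mem_powersetCard.2 ⟨hN, by simp [card_erase_of_mem haE, hcard E hE]⟩⟩
  · rw [card_powersetCard]
    exact Nat.choose_le_pow _ _

lemma card_le_card_mul_card_pow_of_forall_erase_subset (hcard : ∀ E ∈ F, #E = j + 1)
    (hF : ∀ E ∈ F, ∃ a ∈ S, a ∈ E ∧ E.erase a ⊆ X) : #F ≤ #S * #X ^ j := by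
  simpa using card_le_sum_card_pow_of_forall_erase_subset (N := fun _ ↦ X) hcard hF

lemma card_le_of_forall_one_lt_card_inter [Fintype V] (hcard : ∀ E ∈ F, #E = j + 2)
    (hF : ∀ E ∈ F, 1 < #(E ∩ L)) : #F ≤ #L ^ 2 * Fintype.card V ^ j := by
  set T : Finset (Finset V) := {D | #D = j + 1 ∧ ∃ b ∈ L, b ∈ D}
  have hT : #T ≤ #L * Fintype.card V ^ j := by
    refine card_le_card_mul_card_pow_of_forall_erase_subset (X := univ) (fun D hD ↦ ?_)
      fun D hD ↦ ?_
    · exact (mem_filter_univ D |>.1 hD).1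
    · obtain ⟨b, hbL, hbD⟩ := (mem_filter_univ D |>.1 hD).2
      exact ⟨b, hbL, hbD, subset_univ _⟩
  have hFT : #F ≤ ∑ _a ∈ L, #T := card_le_sum_card_of_forall_erase_mem fun E hE ↦ by
    obtain ⟨a, ha, b, hb, hab⟩ := one_lt_card.1 (hF E hE)
    obtain ⟨haE, haL⟩ := mem_inter.1 ha
    obtain ⟨hbE, hbL⟩ := mem_inter.1 hb
    exact ⟨a, haL, haE, (mem_filter_univ _).2
      ⟨by simp [card_erase_of_mem haE, hcard E hE], b, hbL, mem_erase.2 ⟨hab.symm, hbE⟩⟩⟩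
  calc #F ≤ #L * #T := by simpa using hFT
    _ ≤ #L * (#L * Fintype.card V ^ j) := Nat.mul_le_mul_left _ hT
    _ = #L ^ 2 * Fintype.card V ^ j := by ring

lemma sdiff_eq_erase_of_card_inter_le_one {E : Finset V} {a : V} (hE : #(E ∩ L) ≤ 1)
    (haE : a ∈ E) (haL : a ∈ L) : E \ L = E.erase a := by
  have hEL : E ∩ L = {a} := eq_singleton_iff_unique_mem.2
    ⟨mem_inter.2 ⟨haE, haL⟩, fun b hb ↦ card_le_one.1 hE b hb a (mem_inter.2 ⟨haE, haL⟩)⟩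
  rw [← sdiff_inter_self_left, hEL, sdiff_singleton_eq_erase]

end EraseCounting

section CenteredMembers

variable {V : Type*} [Fintype V] {G : SimpleGraph V} [DecidableRel G.Adj] {F : Finset (Finset V)}
  {L S : Finset V} {j t : ℕ}

lemma card_le_sum_degree_pow_of_forall_isCenter (hcard : ∀ E ∈ F, #E = j + 1)
    (hF : ∀ E ∈ F, ∃ a ∈ S, IsCenter G E a) : #F ≤ ∑ a ∈ S, G.degree a ^ j := by
  classical
  refine card_le_sum_card_pow_of_forall_erase_subset (N := fun a ↦ G.neighborFinset a) hcard
    fun E hE ↦ ?_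
  obtain ⟨a, haS, haE, hadj⟩ := hF E hE
  refine ⟨a, haS, haE, fun x hx ↦ ?_⟩
  obtain ⟨hxa, hxE⟩ := mem_erase.1 hx
  exact (G.mem_neighborFinset a x).2 (hadj x hxE hxa)

variable [DecidableEq V]

/-- A member is determined by its trace `D` outside `L` together with its centre in `L`, which is
adjacent to every vertex of `D`. -/
theorem card_le_mul_choose_of_forall_isCenter (hcard : ∀ E ∈ F, #E = j + 1)
    (hinter : ∀ E ∈ F, #(E ∩ L) ≤ 1) (hF : ∀ E ∈ F, ∃ a ∈ L, IsCenter G E a)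
    (hdeg : ∀ E ∈ F, ∃ x ∈ E \ L, #{v ∈ L | G.Adj v x} ≤ t) :
    #F ≤ t * (Fintype.card V).choose j := by
  have hmaps : ∀ E ∈ F, E \ L ∈ powersetCard j (univ : Finset V) := fun E hE ↦ by
    obtain ⟨a, haL, haE, -⟩ := hF E hE
    rw [sdiff_eq_erase_of_card_inter_le_one (hinter E hE) haE haL]
    simp [card_erase_of_mem haE, hcard E hE]
  have hfiber : ∀ D ∈ powersetCard j (univ : Finset V), #{E ∈ F | E \ L = D} ≤ t := fun D _ ↦ by
    obtain h | ⟨E₀, hE₀⟩ := {E ∈ F | E \ L = D}.eq_empty_or_nonempty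
    · simp [h]
    obtain ⟨hE₀F, rfl⟩ := mem_filter.1 hE₀
    obtain ⟨x, hx, hxt⟩ := hdeg E₀ hE₀F
    have hsub : {E ∈ F | E \ L = E₀ \ L} ⊆ {v ∈ L | G.Adj v x}.image (insert · (E₀ \ L)) := by
      intro E hE
      obtain ⟨hEF, hED⟩ := mem_filter.1 hE
      obtain ⟨a, haL, haE, hadj⟩ := hF E hEF
      obtain ⟨hxE, hxL⟩ := mem_sdiff.1 (hED ▸ hx)
      refine mem_image.2 ⟨a, mem_filter.2 ⟨haL, hadj x hxE fun h ↦ hxL (h ▸ haL)⟩, ?_⟩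
      rw [← hED, sdiff_eq_erase_of_card_inter_le_one (hinter E hEF) haE haL, insert_erase haE]
    exact (card_le_card hsub).trans (card_image_le.trans hxt)
  simpa using card_le_mul_card_image_of_maps_to hmaps t hfiber

theorem card_le_of_forall_exists_isCenter (hcard : ∀ E ∈ F, #E = j + 2)
    (hF : ∀ E ∈ F, ∃ a, IsCenter G E a) (L : Finset V) (t : ℕ) :
    #F ≤ t * (Fintype.card V).choose (j + 1) + ∑ a ∈ Lᶜ, G.degree a ^ (j + 1) +
      #L ^ 2 * Fintype.card V ^ j + #L * #{x | t < #{v ∈ L | G.Adj v x}} ^ (j + 1) := by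
  classical
  set X : Finset V := {x | t < #{v ∈ L | G.Adj v x}} with hX
  set Fout := {E ∈ F | ∃ a ∈ Lᶜ, IsCenter G E a}
  set Ftwo := {E ∈ F | 1 < #(E ∩ L)}
  set Frich := {E ∈ F | ∃ a ∈ L, a ∈ E ∧ E.erase a ⊆ X}
  set Fpoor := {E ∈ F | #(E ∩ L) ≤ 1 ∧ (∃ a ∈ L, IsCenter G E a) ∧
    ∃ x ∈ E \ L, #{v ∈ L | G.Adj v x} ≤ t}
  have hcover : F ⊆ Fpoor ∪ Fout ∪ Ftwo ∪ Frich := fun E hE ↦ by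
    obtain ⟨a, ha⟩ := hF E hE
    by_cases haL : a ∈ L; swap
    · simp [Fout, hE, show ∃ a ∉ L, IsCenter G E a from ⟨a, haL, ha⟩]
    by_cases htwo : 1 < #(E ∩ L)
    · simp [Ftwo, hE, htwo]
    by_cases hrich : E.erase a ⊆ X
    · simp [Frich, hE, show ∃ a ∈ L, a ∈ E ∧ E.erase a ⊆ X from ⟨a, haL, ha.1, hrich⟩]
    · have hone : #(E ∩ L) ≤ 1 := not_lt.1 htwo
      rw [← sdiff_eq_erase_of_card_inter_le_one hone ha.1 haL, not_subset] at hrich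
      obtain ⟨x, hx, hxX⟩ := hrich
      have hxt : #{v ∈ L | G.Adj v x} ≤ t := by simpa [hX] using hxX
      have hpoor : E ∈ Fpoor := mem_filter.2 ⟨hE, hone, ⟨a, haL, ha⟩, x, hx, hxt⟩
      simp [hpoor]
  have hcardFilter (p : Finset V → Prop) [DecidablePred p] : ∀ E ∈ F.filter p, #E = j + 2 :=
    fun E hE ↦ hcard E (filter_subset _ _ hE)
  have hpoor : #Fpoor ≤ t * (Fintype.card V).choose (j + 1) :=
    card_le_mul_choose_of_forall_isCenter (hcardFilter _) (fun E hE ↦ (mem_filter.1 hE).2.1)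
      (fun E hE ↦ (mem_filter.1 hE).2.2.1) fun E hE ↦ (mem_filter.1 hE).2.2.2
  have hout : #Fout ≤ ∑ a ∈ Lᶜ, G.degree a ^ (j + 1) :=
    card_le_sum_degree_pow_of_forall_isCenter (hcardFilter _) fun E hE ↦ (mem_filter.1 hE).2
  have htwo : #Ftwo ≤ #L ^ 2 * Fintype.card V ^ j :=
    card_le_of_forall_one_lt_card_inter (hcardFilter _) fun E hE ↦ (mem_filter.1 hE).2
  have hrich : #Frich ≤ #L * #X ^ (j + 1) :=
    card_le_card_mul_card_pow_of_forall_erase_subset (hcardFilter _) fun E hE ↦ (mem_filter.1 hE).2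
  have hunion := (card_le_card hcover).trans ((card_union_le _ _).trans (add_le_add_left
    ((card_union_le _ _).trans (add_le_add_left (card_union_le _ _) _)) _))
  omega

end CenteredMembers

section DegreeThreshold

variable {V : Type*} [Fintype V] {G : SimpleGraph V} [DecidableRel G.Adj]

lemma card_filter_le_degree_mul_le_sum_degree (c : ℝ) [DecidablePred fun v ↦ c ≤ G.degree v] :
    #{v | c ≤ (G.degree v : ℝ)} * c ≤ ∑ v, (G.degree v : ℝ) :=
  calc #{v | c ≤ (G.degree v : ℝ)} * c ≤ ∑ v with c ≤ (G.degree v : ℝ), (G.degree v : ℝ) := by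
        rw [← nsmul_eq_mul]
        exact card_nsmul_le_sum _ _ _ fun v hv ↦ (mem_filter.1 hv).2
    _ ≤ ∑ v, (G.degree v : ℝ) :=
        sum_le_univ_sum_of_nonneg fun v ↦ by positivity

lemma card_filter_pow_le_degree_le {A y : ℝ} {j : ℕ} (hy : 0 < y)
    (hyV : y ^ (j + 1) = Fintype.card V) (hdeg : ∑ v, (G.degree v : ℝ) ≤ A * Fintype.card V)
    [DecidablePred fun v ↦ y ^ j ≤ G.degree v] : #{v | y ^ j ≤ (G.degree v : ℝ)} ≤ A * y := by
  refine le_of_mul_le_mul_right (a := y ^ j) ?_ (by positivity)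
  calc #{v | y ^ j ≤ (G.degree v : ℝ)} * y ^ j ≤ A * Fintype.card V :=
        (card_filter_le_degree_mul_le_sum_degree _).trans hdeg
    _ = A * y * y ^ j := by rw [← hyV]; ring

lemma sum_degree_pow_le_of_forall_degree_le {S : Finset V} {c : ℝ} (hc : 0 ≤ c)
    (hS : ∀ v ∈ S, G.degree v ≤ c) (j : ℕ) :
    ∑ v ∈ S, (G.degree v : ℝ) ^ (j + 1) ≤ c ^ j * ∑ v, (G.degree v : ℝ) :=
  calc ∑ v ∈ S, (G.degree v : ℝ) ^ (j + 1) ≤ ∑ v ∈ S, c ^ j * (G.degree v : ℝ) :=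
        sum_le_sum fun v hv ↦ by rw [pow_succ]; gcongr; exact hS v hv
    _ ≤ ∑ v, c ^ j * (G.degree v : ℝ) := sum_le_univ_sum_of_nonneg fun v ↦ by positivity
    _ = c ^ j * ∑ v, (G.degree v : ℝ) := (mul_sum ..).symm

/-- The vertices of degree at least `y ^ j` play the role of `L` in
`card_le_of_forall_exists_isCenter`; there are `O(y)` of them. -/
theorem card_le_of_sum_degree_le_of_forall_exists_isCenter {F : Finset (Finset V)}
    {j t A B : ℕ} {y : ℝ} (hj : 1 ≤ j) (hy : 1 ≤ y)
    (hyV : y ^ (j + 1) = Fintype.card V) (hcard : ∀ E ∈ F, #E = j + 2)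
    (hF : ∀ E ∈ F, ∃ a, IsCenter G E a) (hdeg : ∑ v, G.degree v ≤ A * Fintype.card V)
    (hL : ∀ L : Finset V, #{x | t < #{v ∈ L | G.Adj v x}} ≤ B * #L) :
    (#F : ℝ) ≤ t * (Fintype.card V).choose (j + 1) +
      (A + A ^ 2 + A ^ (j + 2) * B ^ (j + 1)) * (Fintype.card V ^ j * y ^ 2) := by
  classical
  set n := Fintype.card V
  set L : Finset V := {v | y ^ j ≤ (G.degree v : ℝ)} with hLdef
  set X : Finset V := {x | t < #{v ∈ L | G.Adj v x}}
  have hdegR : ∑ v, (G.degree v : ℝ) ≤ A * n := mod_cast hdeg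
  have hLcard : (#L : ℝ) ≤ A * y := card_filter_pow_le_degree_le (by positivity) hyV hdegR
  have hXcard : (#X : ℝ) ≤ B * (A * y) :=
    calc (#X : ℝ) ≤ B * #L := mod_cast hL L
      _ ≤ B * (A * y) := by gcongr
  have hout : ∑ v ∈ Lᶜ, (G.degree v : ℝ) ^ (j + 1) ≤ A * (n ^ j * y ^ 2) :=
    calc ∑ v ∈ Lᶜ, (G.degree v : ℝ) ^ (j + 1) ≤ (y ^ j) ^ j * ∑ v, (G.degree v : ℝ) :=
          sum_degree_pow_le_of_forall_degree_le (by positivity)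
            (fun v hv ↦ (by simpa [hLdef] using hv : _ < y ^ j).le) j
      _ ≤ (y ^ j) ^ j * (A * n) := by gcongr
      _ = A * (n ^ j * y) := by rw [← hyV]; ring
      _ ≤ A * (n ^ j * y ^ 2) := by gcongr; exact le_self_pow₀ hy two_ne_zero
  have htwo : (#L : ℝ) ^ 2 * n ^ j ≤ A ^ 2 * (n ^ j * y ^ 2) :=
    calc (#L : ℝ) ^ 2 * n ^ j ≤ (A * y) ^ 2 * n ^ j := by gcongr
      _ = A ^ 2 * (n ^ j * y ^ 2) := by ring
  have hrich : (#L : ℝ) * #X ^ (j + 1) ≤ A ^ (j + 2) * B ^ (j + 1) * (n ^ j * y ^ 2) :=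
    calc (#L : ℝ) * #X ^ (j + 1) ≤ A * y * (B * (A * y)) ^ (j + 1) := by gcongr
      _ = A ^ (j + 2) * B ^ (j + 1) * (n * y) := by rw [← hyV]; ring
      _ ≤ A ^ (j + 2) * B ^ (j + 1) * (n ^ j * y ^ 2) := by
          have hn : (1 : ℝ) ≤ n := hyV ▸ one_le_pow₀ hy
          gcongr
          · exact le_self_pow₀ hn (by omega)
          · exact le_self_pow₀ hy two_ne_zero
  have hsum : (#F : ℝ) ≤ t * n.choose (j + 1) + ∑ v ∈ Lᶜ, (G.degree v : ℝ) ^ (j + 1) +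
      #L ^ 2 * n ^ j + #L * #X ^ (j + 1) := mod_cast card_le_of_forall_exists_isCenter hcard hF L t
  linarith

end DegreeThreshold

lemma rpow_eq_pow_mul_rpow_inv_sq {x : ℝ} (hx : 0 < x) {k : ℕ} (hk : 2 ≤ k) :
    x ^ ((k : ℝ) - 2 + 2 / ((k : ℝ) - 1)) = x ^ (k - 2) * (x ^ ((k - 1 : ℕ) : ℝ)⁻¹) ^ 2 := by
  rw [← Real.rpow_natCast, ← Real.rpow_mul_natCast hx.le, ← Real.rpow_add hx, Nat.cast_sub hk,
    Nat.cast_sub (one_le_two.trans hk)]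
  push_cast
  ring_nf

theorem exists_forall_card_lt_of_kernelGraph_free {k : ℕ} (hk : 4 ≤ k) {s ℓ : ℕ} (hks : 2 * k ≤ s)
    (hℓs : ℓ ≤ s) (t q : ℕ) : ∃ C : ℝ, 0 < C ∧ ∀ {V : Type*} [Fintype V] [Nonempty V]
      [DecidableEq V] (F : Finset (Finset V)), (∀ E ∈ F, #E = k) →
      (pathGraph (ℓ + 1)).Free (kernelGraph s F) →
      (completeBipartiteGraph (Fin (t + 1)) (Fin q)).Free (kernelGraph s F) →
      (#F : ℝ) < t * (Fintype.card V).choose (k - 1) +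
        C * (Fintype.card V : ℝ) ^ ((k : ℝ) - 2 + 2 / ((k : ℝ) - 1)) := by
  set N := k ^ k * homogeneityConst s (2 ^ k)
  set A := 2 * ℓ
  set B := ℓ + 2 ^ ℓ * q
  refine ⟨N + (A + A ^ 2 + A ^ k * B ^ (k - 1)) + 1, by positivity, ?_⟩
  intro V _ _ _ F hF hpath hbip
  classical
  set n := Fintype.card V
  have hn : (1 : ℝ) ≤ n := mod_cast Fintype.card_pos
  set y : ℝ := (n : ℝ) ^ ((k - 1 : ℕ) : ℝ)⁻¹
  have hy : 1 ≤ y := Real.one_le_rpow hn (by positivity)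
  have hyn : y ^ (k - 1) = n := Real.rpow_inv_natCast_pow (by positivity) (by omega)
  rw [rpow_eq_pow_mul_rpow_inv_sq (by positivity) (by omega)]
  set F₁ := {E ∈ F | ∃ a, IsCenter (kernelGraph s F) E a}
  set F₀ := {E ∈ F | ¬ ∃ a, IsCenter (kernelGraph s F) E a}
  have huncentered : (#F₀ : ℝ) ≤ N * (n ^ (k - 2) * y ^ 2) :=
    calc (#F₀ : ℝ) ≤ N * n ^ (k - 2) := mod_cast card_le_of_forall_not_isCenter hk hks hℓs hpath
          (filter_subset _ _) (fun E hE ↦ hF E (filter_subset _ _ hE)) fun E hE ↦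
            not_exists.1 (mem_filter.1 hE).2
      _ ≤ N * (n ^ (k - 2) * y ^ 2) := by
          gcongr
          exact le_mul_of_one_le_right (by positivity) (one_le_pow₀ hy)
  have hcentered : (#F₁ : ℝ) ≤ t * n.choose (k - 1) +
      (A + A ^ 2 + A ^ k * B ^ (k - 1)) * (n ^ (k - 2) * y ^ 2) := by
    obtain ⟨j, rfl⟩ : ∃ j, k = j + 2 := ⟨k - 2, by omega⟩
    refine card_le_of_sum_degree_le_of_forall_exists_isCenter (by omega) hy hyn
      (fun E hE ↦ hF E (filter_subset _ _ hE)) (fun E hE ↦ (mem_filter.1 hE).2)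
      (sum_degree_le_of_pathGraph_free hpath) fun L ↦
        card_le_of_pathGraph_free_of_completeBipartiteGraph_free hpath hbip fun x hx ↦ ?_
    exact (mem_filter.1 hx).2
  have hsplit : (#F₁ : ℝ) + #F₀ = #F := mod_cast card_filter_add_card_filter_not _
  have hpos : 0 < (n : ℝ) ^ (k - 2) * y ^ 2 := by positivity
  linarith

/-- Theorem 6.2: for k ≥ 4 and positive ℓ, t, q there are a constant C = C(k,ℓ,t,q) and
n₀ = n₀(k,ℓ) such that for n ≥ n₀ every family of k-sets on [n] with at least
t·C(n,k-1) + C·n^{k-2+2/(k-1)} members contains a linear path of length ℓ or the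
k-blowup of K_{t+1,q}. -/
theorem path_or_bipartite_blowup (k ℓ t q : ℕ) (hk : 4 ≤ k)
    (hl : 1 ≤ ℓ) (ht : 1 ≤ t) (hq : 1 ≤ q) :
    ∃ C : ℝ, 0 < C ∧ ∃ n₀ : ℕ, ∀ n : ℕ, n₀ ≤ n →
      ∀ F : Finset (Finset (Fin n)), (∀ A ∈ F, A.card = k) →
        (t : ℝ) * (n.choose (k - 1)) + C * (n : ℝ) ^ ((k : ℝ) - 2 + 2 / ((k : ℝ) - 1))
          ≤ (F.card : ℝ) →
        ContainsLinearPath k ℓ F ∨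
          ContainsBlowup k (completeBipartiteGraph (Fin (t + 1)) (Fin q)) F := by
  classical
  set s := 2 * k + (ℓ + 1 + k * #(pathGraph (ℓ + 1)).edgeFinset) +
    (t + 1 + q + k * #(completeBipartiteGraph (Fin (t + 1)) (Fin q)).edgeFinset)
  obtain ⟨C, hC, hcount⟩ := exists_forall_card_lt_of_kernelGraph_free hk (s := s) (ℓ := ℓ)
    (by omega) (by omega) t q
  refine ⟨C, hC, 1, fun n hn F hF hcard ↦ ?_⟩
  have : NeZero n := ⟨by omega⟩
  by_contra hcontains
  obtain ⟨hnoPath, hnoBlowup⟩ := not_or.1 hcontains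
  have hpath : (pathGraph (ℓ + 1)).Free (kernelGraph s F) := fun h ↦ hnoPath <|
    containsLinearPath_of_containsBlowup_pathGraph (by omega) <|
      containsBlowup_of_isContained_kernelGraph hF h (by simp only [Fintype.card_fin]; omega)
  have hbip : (completeBipartiteGraph (Fin (t + 1)) (Fin q)).Free (kernelGraph s F) := fun h ↦
    hnoBlowup <| containsBlowup_of_isContained_kernelGraph hF h
      (by simp only [Fintype.card_sum, Fintype.card_fin]; omega)
  have hlt := hcount F hF hpath hbip
  rw [Fintype.card_fin] at hlt
  exact hlt.not_ge hcard
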